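/- arXiv:math/0703078 — 5 statements merged into one kernel-verified Lean document; each statement's English description precedes it below -/
import Mathlib

section
/- Let (a, F) be a game with ξ := ess inf a > 0, a non-constant (F-a.e.), and E := ∫_I a dF finite, and let n > −ξ. For every u ∈ (ξ + 1/H_ξ, E), the pre-optimal proportion t̃^{(n)}_{u+n} of the translated game (a+n, F) at price u+n (the unique s ∈ (0, (u+n)/(u−ξ)) with ∫_I (a(x)−u)/((a(x)−u)s + u + n) dF = 0) satisfies t̃^{(n)}_{u+n}/(u+n) = t̃_u/u; in particular this ratio is independent of n. -/
/-!
Write `b = a - u`, `d = u - ess inf a > 0`. Dividing by the price, the equation defining `t`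
becomes `∫ b / (1 + b p) = 0` with `p = t / u`, and the one defining `s` becomes
`∫ b / (1 + b q) = 0` with `q = s / (u + n)`: the same equation, with both `p` and `q`
in `(0, 1 / d)`. The solution of this equation is unique (`root_unique`), since
`b / (1 + b p) - b / (1 + b q) = (q - p) b² / ((1 + b p) (1 + b q))`
has a sign and vanishes only where `b = 0`, while `b` is not a.e. zero.
-/

open MeasureTheory Real Set Filter Topology
open scoped Classical

/-- `1/H_ξ` where `H_ξ := ∫ 1/(a x − ess inf a) dF`, with the convention that
`1/H_ξ = 0` when `1/(a − ξ)` is not integrable (in particular when `H_ξ = ∞`). -/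
noncomputable def invHxi (μ : MeasureTheory.Measure ℝ) (a : ℝ → ℝ) : ℝ :=
  if MeasureTheory.Integrable (fun x => (a x - essInf a μ)⁻¹) μ then
    (∫ x, (a x - essInf a μ)⁻¹ ∂μ)⁻¹
  else 0

/-- The pre-growth rate `G̃_u(t) = exp (∫ log (a x · t / u − t + 1) dF)`. -/
noncomputable def preG (μ : MeasureTheory.Measure ℝ) (a : ℝ → ℝ) (u t : ℝ) : ℝ :=
  Real.exp (∫ x, Real.log (a x * t / u - t + 1) ∂μ)

/-- `H := ∫ 1/a dF`. -/
noncomputable def Hh (μ : MeasureTheory.Measure ℝ) (a : ℝ → ℝ) : ℝ :=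
  ∫ x, (a x)⁻¹ ∂μ

/-- A positive real-valued essential infimum is an a.e. lower bound: positivity excludes the junk
value `sSup ∅ = 0` taken when there is no a.e. lower bound. -/
theorem ae_essInf_le_of_pos (μ : Measure ℝ) (a : ℝ → ℝ) (hxi : 0 < essInf a μ) :
    ∀ᵐ x ∂μ, essInf a μ ≤ a x := by
  refine ae_essInf_le ?_
  by_contra hb
  have hempty : {c : ℝ | ∀ᶠ x in ae μ, c ≤ a x} = ∅ := by
    ext c
    simp only [mem_ofPred_eq, mem_empty_iff_false, iff_false]
    intro hc
    exact hb ⟨c, by simpa [Filter.eventually_map] using hc⟩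
  have h0 : essInf a μ = 0 := by
    rw [essInf, Filter.liminf_eq, hempty, Real.sSup_empty]
  exact hxi.ne' h0

theorem invHxi_nonneg (μ : Measure ℝ) (a : ℝ → ℝ) (h : ∀ᵐ x ∂μ, essInf a μ ≤ a x) :
    0 ≤ invHxi μ a := by
  unfold invHxi
  split_ifs
  · refine inv_nonneg.2 (integral_nonneg_of_ae ?_)
    filter_upwards [h] with x hx
    exact inv_nonneg.2 (sub_nonneg.2 hx)
  · exact le_rfl

theorem one_add_mul_lower {b d p : ℝ} (hp : 0 < p) (hb : -d ≤ b) : 1 - d * p ≤ 1 + b * p := by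
  nlinarith

theorem integrable_div_one_add (μ : Measure ℝ) (b : ℝ → ℝ) (hb : Integrable b μ) (d p : ℝ)
    (hbd : ∀ᵐ x ∂μ, -d ≤ b x) (hp : 0 < p) (hdp : d * p < 1) :
    Integrable (fun x => b x / (1 + b x * p)) μ := by
  refine Integrable.mono' (hb.abs.div_const (1 - d * p)) ?_ ?_
  · exact (hb.aemeasurable.div
      (aemeasurable_const.add (hb.aemeasurable.mul_const p))).aestronglyMeasurable
  · filter_upwards [hbd] with x hx
    have h1 := one_add_mul_lower hp hx
    have h2 : 0 < 1 - d * p := by linarith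
    rw [Real.norm_eq_abs, abs_div, abs_of_pos (h2.trans_le h1)]
    gcongr

/-- Uniqueness of the zero of `p ↦ ∫ b / (1 + b p)` on `(0, 1 / d)`, where `-d ≤ b`. -/
theorem root_unique (μ : Measure ℝ) (b : ℝ → ℝ) (hb : Integrable b μ)
    (hb0 : ¬ b =ᵐ[μ] 0) (d p q : ℝ) (hbd : ∀ᵐ x ∂μ, -d ≤ b x)
    (hp : 0 < p) (hdp : d * p < 1) (hq : 0 < q) (hdq : d * q < 1)
    (hip : ∫ x, b x / (1 + b x * p) ∂μ = 0) (hiq : ∫ x, b x / (1 + b x * q) ∂μ = 0) :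
    q = p := by
  by_contra hne
  have hqp : q - p ≠ 0 := sub_ne_zero.2 hne
  have hI := ((integrable_div_one_add μ b hb d p hbd hp hdp).sub
    (integrable_div_one_add μ b hb d q hbd hq hdq)).div_const (q - p)
  have hint : ∫ x, (b x / (1 + b x * p) - b x / (1 + b x * q)) / (q - p) ∂μ = 0 := by
    rw [integral_div, integral_sub (integrable_div_one_add μ b hb d p hbd hp hdp)
      (integrable_div_one_add μ b hb d q hbd hq hdq), hip, hiq]
    simp
  have hae : ∀ᵐ x ∂μ, 0 < 1 + b x * p ∧ 0 < 1 + b x * q ∧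
      (b x / (1 + b x * p) - b x / (1 + b x * q)) / (q - p)
        = b x ^ 2 / ((1 + b x * p) * (1 + b x * q)) := by
    filter_upwards [hbd] with x hx
    have h1 : 0 < 1 + b x * p := lt_of_lt_of_le (by linarith) (one_add_mul_lower hp hx)
    have h2 : 0 < 1 + b x * q := lt_of_lt_of_le (by linarith) (one_add_mul_lower hq hx)
    refine ⟨h1, h2, ?_⟩
    rw [div_sub_div _ _ h1.ne' h2.ne', div_div, div_eq_div_iff (by positivity) (by positivity)]
    ring
  have hz := (integral_eq_zero_iff_of_nonneg_ae (by
    filter_upwards [hae] with x ⟨h1, h2, h3⟩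
    exact (by positivity : (0 : ℝ) ≤ b x ^ 2 / ((1 + b x * p) * (1 + b x * q))).trans_eq h3.symm) hI).1 hint
  apply hb0
  filter_upwards [hae, hz] with x ⟨h1, h2, h3⟩ h4
  have h5 : b x ^ 2 / ((1 + b x * p) * (1 + b x * q)) = 0 := h3.symm.trans h4
  rcases div_eq_zero_iff.1 h5 with h | h
  · simpa using h
  · exact absurd h (by positivity)

/-- Division by the price `v` turns a pre-optimality equation into one in the ratio `t / v`. -/
theorem integral_ratio_eq_zero (μ : Measure ℝ) (b : ℝ → ℝ) (v t : ℝ) (hv : 0 < v)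
    (h : ∫ x, b x / (b x * t + v) ∂μ = 0) :
    ∫ x, b x / (1 + b x * (t / v)) ∂μ = 0 := by
  have : (fun x => b x / (1 + b x * (t / v))) = fun x => v * (b x / (b x * t + v)) := by
    funext x
    have h1 : 1 + b x * (t / v) = (b x * t + v) / v := by field_simp; ring
    rw [h1, div_div_eq_mul_div]
    ring
  rw [this, integral_const_mul, h, mul_zero]

theorem mul_ratio_lt_one {d v t : ℝ} (hd : 0 < d) (hv : 0 < v) (ht : t < v / d) :
    d * (t / v) < 1 := by
  rw [lt_div_iff₀ hd] at ht
  rw [← mul_div_assoc, div_lt_one hv]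
  linarith

/-- Translation invariance of the ratio of the pre-optimal proportion to the price:
if `t = t̃_u` for the game `(a, F)` and `s = t̃^{(n)}_{u+n}` for the translated game
`(a + n, F)`, then `s / (u + n) = t / u`. -/
theorem stmt11 (μ : Measure ℝ) [IsProbabilityMeasure μ] (a : ℝ → ℝ)
    (ha : Measurable a)
    (hnc : ¬ ∃ c : ℝ, a =ᵐ[μ] fun _ => c)
    (hxi : 0 < essInf a μ)
    (hE : Integrable a μ)
    (n : ℝ) (hn : -essInf a μ < n)
    (u : ℝ) (hu : u ∈ Set.Ioo (essInf a μ + invHxi μ a) (∫ x, a x ∂μ))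
    (t s : ℝ)
    (ht : t ∈ Set.Ioo (0 : ℝ) (u / (u - essInf a μ)) ∧
      ∫ x, (a x - u) / ((a x - u) * t + u) ∂μ = 0)
    (hs : s ∈ Set.Ioo (0 : ℝ) ((u + n) / (u - essInf a μ)) ∧
      ∫ x, (a x - u) / ((a x - u) * s + (u + n)) ∂μ = 0) :
    s / (u + n) = t / u := by
  have hle := ae_essInf_le_of_pos μ a hxi
  have hinv := invHxi_nonneg μ a hle
  have hd : 0 < u - essInf a μ := by linarith [hu.1]
  have hu0 : 0 < u := by linarith
  have hun : 0 < u + n := by linarith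
  refine root_unique μ (fun x => a x - u) (hE.sub (integrable_const u)) ?_ (u - essInf a μ)
    (t / u) (s / (u + n)) ?_ (div_pos ht.1.1 hu0) (mul_ratio_lt_one hd hu0 ht.1.2)
    (div_pos hs.1.1 hun) (mul_ratio_lt_one hd hun hs.1.2)
    (integral_ratio_eq_zero μ _ u t hu0 ht.2) (integral_ratio_eq_zero μ _ (u + n) s hun hs.2)
  · intro h
    refine hnc ⟨u, ?_⟩
    filter_upwards [h] with x hx
    exact sub_eq_zero.1 hx
  · filter_upwards [hle] with x hx
    linarith
end

section
/- Let (a, F) be a game with ξ := ess inf a > 0, a non-constant (F-a.e.), and E := ∫_I a dF finite. Then lim_{n→∞} ( (E + n) − 1/H_n ) = 0, where H_n := ∫_I 1/(a(x)+n) dF; equivalently, lim_{n→∞} ( 1/H_n − n ) = E. -/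
/-!
For `n > 0` set `J n = ∫ n a / (a + n)`. Pointwise `n a / (a + n) → a`, dominated by `|a|`
because `a > 0` almost everywhere, so `J n → E` by dominated convergence. Integrating
`n / (a + n) = 1 - n⁻¹ (n a / (a + n))` gives `n H_n = 1 - n⁻¹ J n → 1`, and therefore
`1 / H_n - n = n (1 - n H_n) / (n H_n) = J n / (n H_n) → E`.
-/

open MeasureTheory Real Set Filter Topology
open scoped Classical

/-- The essential infimum of a real function is the supremum of its almost everywhere lower
bounds. As `sSup ∅ = 0` in `ℝ`, positivity also guarantees that such lower bounds exist. -/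
lemma ae_pos_of_essInf_pos {μ : Measure ℝ} {a : ℝ → ℝ} (h : 0 < essInf a μ) :
    ∀ᵐ x ∂μ, 0 < a x := by
  have h' : 0 < sSup {c : ℝ | ∀ᵐ x ∂μ, c ≤ a x} := by
    rwa [essInf, Filter.liminf_eq] at h
  have hne : {c : ℝ | ∀ᵐ x ∂μ, c ≤ a x}.Nonempty := by
    rw [Set.nonempty_iff_ne_empty]
    intro h0
    rw [h0, Real.sSup_empty] at h'
    exact lt_irrefl _ h'
  obtain ⟨c, hc, hc0⟩ := exists_lt_of_lt_csSup hne h'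
  filter_upwards [hc] with x hx using hc0.trans_le hx

lemma tendsto_integral_mul_div_add {μ : Measure ℝ} {a : ℝ → ℝ} (ha : Measurable a)
    (hpos : ∀ᵐ x ∂μ, 0 < a x) (hE : Integrable a μ) :
    Tendsto (fun n : ℝ => ∫ x, a x * (n / (a x + n)) ∂μ) atTop (𝓝 (∫ x, a x ∂μ)) := by
  refine tendsto_integral_filter_of_dominated_convergence (fun x => |a x|) ?_ ?_ hE.abs ?_
  · exact Eventually.of_forall fun n => by fun_prop
  · filter_upwards [eventually_gt_atTop 0] with n hn
    filter_upwards [hpos] with x hx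
    rw [norm_mul, Real.norm_eq_abs, Real.norm_of_nonneg (by positivity)]
    exact mul_le_of_le_one_right (abs_nonneg _) ((div_le_one (by positivity)).2 (by linarith))
  · filter_upwards [hpos] with x hx
    have h1 : Tendsto (fun n : ℝ => a x * (1 - a x / (a x + n))) atTop
        (𝓝 (a x * (1 - 0))) :=
      ((tendsto_const_nhds.div_atTop (tendsto_atTop_add_const_left _ _ tendsto_id)).const_sub
        1).const_mul _
    rw [sub_zero, mul_one] at h1
    refine h1.congr' ?_
    filter_upwards [eventually_gt_atTop 0] with n hn
    have : a x + n ≠ 0 := by positivity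
    field_simp
    ring

lemma mul_integral_inv_add {μ : Measure ℝ} [IsProbabilityMeasure μ] {a : ℝ → ℝ}
    (ha : Measurable a) (hpos : ∀ᵐ x ∂μ, 0 < a x) (hE : Integrable a μ) {n : ℝ} (hn : 0 < n) :
    n * ∫ x, (a x + n)⁻¹ ∂μ = 1 - n⁻¹ * ∫ x, a x * (n / (a x + n)) ∂μ := by
  have hint : Integrable (fun x => a x * (n / (a x + n))) μ := by
    refine hE.mono (by fun_prop) ?_
    filter_upwards [hpos] with x hx
    rw [norm_mul, Real.norm_of_nonneg (show 0 ≤ n / (a x + n) by positivity)]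
    exact mul_le_of_le_one_right (norm_nonneg _) ((div_le_one (by positivity)).2 (by linarith))
  have hone : ∫ _x : ℝ, (1 : ℝ) ∂μ = 1 := by simp
  rw [← integral_const_mul, ← integral_const_mul, ← hone,
    ← integral_sub (integrable_const _) (hint.const_mul _)]
  refine integral_congr_ae ?_
  filter_upwards [hpos] with x hx
  have : a x + n ≠ 0 := by positivity
  field_simp
  ring

/-- `lim_{n→∞} ((E + n) − 1/H_n) = 0`, i.e. `lim_{n→∞} (1/H_n − n) = E`,
where `H_n := ∫ 1/(a + n) dF`. -/
theorem stmt13 (μ : Measure ℝ) [IsProbabilityMeasure μ] (a : ℝ → ℝ)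
    (ha : Measurable a)
    (hnc : ¬ ∃ c : ℝ, a =ᵐ[μ] fun _ => c)
    (hxi : 0 < essInf a μ)
    (hE : Integrable a μ) :
    Tendsto (fun n : ℝ => (∫ x, a x ∂μ + n) - (∫ x, (a x + n)⁻¹ ∂μ)⁻¹) atTop (𝓝 0) ∧
      Tendsto (fun n : ℝ => (∫ x, (a x + n)⁻¹ ∂μ)⁻¹ - n) atTop (𝓝 (∫ x, a x ∂μ)) := by
  have hpos := ae_pos_of_essInf_pos hxi
  have hJ := tendsto_integral_mul_div_add ha hpos hE
  have hK : Tendsto (fun n : ℝ => 1 - n⁻¹ * ∫ x, a x * (n / (a x + n)) ∂μ) atTop (𝓝 1) := by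
    simpa using (tendsto_inv_atTop_zero.mul hJ).const_sub 1
  have h2 : Tendsto (fun n : ℝ => (∫ x, (a x + n)⁻¹ ∂μ)⁻¹ - n) atTop (𝓝 (∫ x, a x ∂μ)) := by
    have h := hJ.div hK one_ne_zero
    rw [div_one] at h
    refine h.congr' ?_
    -- `n H_n → 1` rules out `H_n = 0`, where the inverse would be a junk value.
    filter_upwards [eventually_gt_atTop 0, hK.eventually_ne one_ne_zero] with n hn hne
    have hnH := mul_integral_inv_add ha hpos hE hn
    simp only [Pi.div_apply]
    rw [← hnH] at hne ⊢
    have hJn : ∫ x, a x * (n / (a x + n)) ∂μ = n * (1 - n * ∫ x, (a x + n)⁻¹ ∂μ) := by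
      rw [hnH, sub_sub_cancel, mul_inv_cancel_left₀ hn.ne']
    have hH : ∫ x, (a x + n)⁻¹ ∂μ ≠ 0 := right_ne_zero_of_mul hne
    rw [hJn]
    generalize ∫ x, (a x + n)⁻¹ ∂μ = H at hH
    field_simp
  refine ⟨?_, h2⟩
  have h := h2.const_sub (∫ x, a x ∂μ)
  rw [sub_self] at h
  refine h.congr fun n => ?_
  ring
end

section
/- Let (a, F) be a game with ξ := ess inf a > 0, a non-constant (F-a.e.), E := ∫_I a dF finite, and ∫_{a(x)>1} log a(x) dF < ∞, and let r > 0. For all sufficiently large n one has e^r > H_n · exp(∫_I log(a(x)+n) dF) (so the optimal price of the translated game (a+n, F) is u^{(n)}_r := e^{−r} · exp(∫_I log(a(x)+n) dF), which is < 1/H_n), and lim_{n→∞} u^{(n)}_r/(E+n) = e^{−r}; i.e. the optimal price of the translated game is asymptotic to its expectation divided by e^r. -/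
/-!
Since `ess inf a > 0`, the profit function is nonnegative almost everywhere. For `n > 0` the
elementary inequality `log (1 + y) ≤ y` with `y = a / n` gives, almost everywhere,
`log n ≤ log (a + n) ≤ log n + a / n`, and integrating and exponentiating yields
`n ≤ exp (∫ log (a + n)) ≤ n * exp (E / n)`. Together with `∫ (a + n)⁻¹ ≤ n⁻¹` this bounds
`H_n * exp (∫ log (a + n))` by `exp (E / n)`, which is below `exp r` as soon as `n > E / r`.
Dividing the two-sided bound by `E + n` gives the limit by squeezing.
-/

open MeasureTheory Real Set Filter Topology
open scoped Classical

/-- The essential infimum is a conditional supremum of a set of reals, with value `0` when that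
set is empty; its positivity therefore provides a positive essential lower bound. -/
lemma ae_nonneg_of_essInf_pos {μ : Measure ℝ} {a : ℝ → ℝ} (hxi : 0 < essInf a μ) :
    ∀ᵐ x ∂μ, 0 ≤ a x := by
  rw [essInf, Filter.liminf_eq] at hxi
  have hne : {c : ℝ | ∀ᵐ x ∂μ, c ≤ a x}.Nonempty := by
    by_contra h
    rw [Set.not_nonempty_iff_eq_empty] at h
    rw [h, Real.sSup_empty] at hxi
    exact lt_irrefl _ hxi
  obtain ⟨c, hc, hc0⟩ := exists_lt_of_lt_csSup hne hxi
  filter_upwards [hc] with x hx using hc0.le.trans hx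

lemma log_add_bounds {y n : ℝ} (hy : 0 ≤ y) (hn : 0 < n) :
    Real.log n ≤ Real.log (y + n) ∧ Real.log (y + n) ≤ Real.log n + y / n := by
  refine ⟨Real.log_le_log hn (by linarith), ?_⟩
  have h1 : 0 < 1 + y / n := by positivity
  have h2 : y + n = n * (1 + y / n) := by field_simp; ring
  rw [h2, Real.log_mul hn.ne' h1.ne']
  linarith [Real.log_le_sub_one_of_pos h1]

lemma integrable_log_add {μ : Measure ℝ} [IsProbabilityMeasure μ] {a : ℝ → ℝ}
    (ha : Measurable a) (h0 : ∀ᵐ x ∂μ, 0 ≤ a x) (hE : Integrable a μ) {n : ℝ} (hn : 0 < n) :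
    Integrable (fun x => Real.log (a x + n)) μ := by
  refine Integrable.mono' (g := fun x => |Real.log n| + a x / n)
    ((integrable_const _).add (hE.div_const n))
    (Real.measurable_log.comp (ha.add_const n)).aestronglyMeasurable ?_
  filter_upwards [h0] with x hx
  obtain ⟨h1, h2⟩ := log_add_bounds hx hn
  have h3 : 0 ≤ a x / n := by positivity
  rw [Real.norm_eq_abs, abs_le]
  constructor
  · linarith [neg_abs_le (Real.log n)]
  · linarith [le_abs_self (Real.log n)]

lemma exp_integral_log_bounds {μ : Measure ℝ} [IsProbabilityMeasure μ] {a : ℝ → ℝ}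
    (ha : Measurable a) (h0 : ∀ᵐ x ∂μ, 0 ≤ a x) (hE : Integrable a μ) {n : ℝ} (hn : 0 < n) :
    n ≤ Real.exp (∫ x, Real.log (a x + n) ∂μ) ∧
    Real.exp (∫ x, Real.log (a x + n) ∂μ) ≤ n * Real.exp ((∫ x, a x ∂μ) / n) := by
  have hL := integrable_log_add ha h0 hE hn
  constructor
  · have h : ∫ _, Real.log n ∂μ ≤ ∫ x, Real.log (a x + n) ∂μ := by
      refine integral_mono_ae (integrable_const _) hL ?_
      filter_upwards [h0] with x hx using (log_add_bounds hx hn).1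
    rw [integral_const, probReal_univ, one_smul] at h
    calc n = Real.exp (Real.log n) := (Real.exp_log hn).symm
      _ ≤ _ := Real.exp_le_exp.mpr h
  · have h : ∫ x, Real.log (a x + n) ∂μ ≤ ∫ x, (Real.log n + a x / n) ∂μ := by
      refine integral_mono_ae hL ((integrable_const _).add (hE.div_const n)) ?_
      filter_upwards [h0] with x hx using (log_add_bounds hx hn).2
    rw [integral_add (integrable_const _) (hE.div_const n), integral_const, probReal_univ,
      one_smul, integral_div] at h
    calc _ ≤ Real.exp (Real.log n + (∫ x, a x ∂μ) / n) := Real.exp_le_exp.mpr h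
      _ = _ := by rw [Real.exp_add, Real.exp_log hn]

lemma integral_inv_bounds {μ : Measure ℝ} [IsProbabilityMeasure μ] {a : ℝ → ℝ}
    (ha : Measurable a) (h0 : ∀ᵐ x ∂μ, 0 ≤ a x) {n : ℝ} (hn : 0 < n) :
    0 < ∫ x, (a x + n)⁻¹ ∂μ ∧ ∫ x, (a x + n)⁻¹ ∂μ ≤ n⁻¹ := by
  have hle : ∀ᵐ x ∂μ, (a x + n)⁻¹ ≤ n⁻¹ := by
    filter_upwards [h0] with x hx
    exact inv_anti₀ hn (by linarith)
  have hpos : ∀ᵐ x ∂μ, 0 < (a x + n)⁻¹ := by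
    filter_upwards [h0] with x hx
    positivity
  have hint : Integrable (fun x => (a x + n)⁻¹) μ := by
    refine Integrable.mono' (integrable_const n⁻¹)
      (ha.add_const n).inv.aestronglyMeasurable ?_
    filter_upwards [hle, hpos] with x h1 h2
    rwa [Real.norm_eq_abs, abs_of_pos h2]
  constructor
  · have hnn : 0 ≤ᵐ[μ] fun x => (a x + n)⁻¹ := hpos.mono fun x hx => hx.le
    refine lt_of_le_of_ne (integral_nonneg_of_ae hnn) fun h => ?_
    have hz := (integral_eq_zero_iff_of_nonneg_ae hnn hint).mp h.symm
    obtain ⟨x, h1, h2⟩ := (hz.and hpos).exists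
    exact h2.ne' h1
  · have h := integral_mono_ae hint (integrable_const n⁻¹) hle
    rwa [integral_const, probReal_univ, one_smul] at h

/-- For all sufficiently large `n` one has `e^r > H_n · exp (∫ log (a+n) dF)` (so the
optimal price of the translated game is `u^{(n)}_r = e^{-r} · exp (∫ log (a+n) dF)`,
which is `< 1/H_n`), and `lim_{n→∞} u^{(n)}_r / (E + n) = e^{-r}`. -/
theorem stmt16 (μ : Measure ℝ) [IsProbabilityMeasure μ] (a : ℝ → ℝ)
    (ha : Measurable a)
    (hnc : ¬ ∃ c : ℝ, a =ᵐ[μ] fun _ => c)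
    (hxi : 0 < essInf a μ)
    (hE : Integrable a μ)
    (hlog : IntegrableOn (fun x => Real.log (a x)) {x | 1 < a x} μ)
    (r : ℝ) (hr : 0 < r) :
    (∀ᶠ n : ℝ in atTop,
      (∫ x, (a x + n)⁻¹ ∂μ) * Real.exp (∫ x, Real.log (a x + n) ∂μ) < Real.exp r ∧
      Real.exp (-r) * Real.exp (∫ x, Real.log (a x + n) ∂μ) < (∫ x, (a x + n)⁻¹ ∂μ)⁻¹) ∧
    Tendsto (fun n : ℝ =>
        Real.exp (-r) * Real.exp (∫ x, Real.log (a x + n) ∂μ) / (∫ x, a x ∂μ + n))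
      atTop (𝓝 (Real.exp (-r))) := by
  have h0 := ae_nonneg_of_essInf_pos hxi
  set E := ∫ x, a x ∂μ with hEdef
  have hE0 : 0 ≤ E := integral_nonneg_of_ae h0
  constructor
  · filter_upwards [eventually_gt_atTop (E / r), eventually_gt_atTop 0] with n hn hn0
    obtain ⟨hH, hH'⟩ := integral_inv_bounds ha h0 hn0
    have hG := (exp_integral_log_bounds ha h0 hE hn0).2
    have hlt : E / n < r := by
      rw [div_lt_iff₀ hr] at hn
      rw [div_lt_iff₀ hn0]
      linarith
    have key : (∫ x, (a x + n)⁻¹ ∂μ) * Real.exp (∫ x, Real.log (a x + n) ∂μ) < Real.exp r :=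
      calc _ ≤ n⁻¹ * (n * Real.exp (E / n)) :=
            mul_le_mul hH' hG (Real.exp_pos _).le (by positivity)
        _ = Real.exp (E / n) := by field_simp
        _ < Real.exp r := Real.exp_lt_exp.mpr hlt
    refine ⟨key, ?_⟩
    rw [Real.exp_neg, lt_inv_comm₀ (by positivity) hH, mul_inv, inv_inv,
      ← div_eq_mul_inv, lt_div_iff₀ (Real.exp_pos _)]
    exact key
  · have hq : Tendsto (fun n : ℝ => E / n) atTop (𝓝 0) := tendsto_id.const_div_atTop E
    have hlow : Tendsto (fun n : ℝ => n / (E + n)) atTop (𝓝 1) := by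
      have h : Tendsto (fun n : ℝ => (E / n + 1)⁻¹) atTop (𝓝 ((0 + 1)⁻¹)) :=
        (hq.add_const 1).inv₀ (by norm_num)
      rw [zero_add, inv_one] at h
      refine h.congr' ?_
      filter_upwards [eventually_gt_atTop 0] with n hn
      field_simp
    have hup : Tendsto (fun n : ℝ => n / (E + n) * Real.exp (E / n)) atTop (𝓝 1) := by
      simpa using hlow.mul ((Real.continuous_exp.tendsto 0).comp hq)
    have hG : Tendsto (fun n : ℝ => Real.exp (∫ x, Real.log (a x + n) ∂μ) / (E + n))
        atTop (𝓝 1) := by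
      refine tendsto_of_tendsto_of_tendsto_of_le_of_le' hlow hup ?_ ?_
      · filter_upwards [eventually_gt_atTop 0] with n hn
        have := (exp_integral_log_bounds ha h0 hE hn).1
        gcongr
      · filter_upwards [eventually_gt_atTop 0] with n hn
        have := (exp_integral_log_bounds ha h0 hE hn).2
        rw [div_mul_eq_mul_div]
        gcongr
    simpa [mul_div_assoc] using hG.const_mul (Real.exp (-r))
end

section
/- Let A, B, p be reals with 0 < B < A and 0 < p < 1, let E := pA + (1−p)B, and let u, n be reals with B < u < E and n > −B. Then t := (E−u)(n+u)/((A−u)(u−B)) satisfies 0 < t < (u+n)/(u−B) and p·(A−u)/((A−u)t + u + n) + (1−p)·(B−u)/((B−u)t + u + n) = 0; i.e. t is the pre-optimal proportion of the translated two-point game at price u+n. -/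
/-!
Since `E - B = p (A - B)` and `A - E = (1 - p) (A - B)`, substituting `t` turns the two
denominators into `(n + u) p (A - B) / (u - B)` and `(n + u) (1 - p) (A - B) / (A - u)`.
The two summands are then `± (A - u) (u - B) / ((n + u) (A - B))` and cancel. The upper bound
on `t` amounts to `E < A`.
-/

open MeasureTheory Real Set Filter Topology
open scoped Classical

/-- Explicit pre-optimal proportion of the translated two-point game:
`t = (E − u)(n + u)/((A − u)(u − B))` lies in `(0, (u+n)/(u−B))` and solves the
pre-optimal-proportion equation at price `u + n`. -/
theorem stmt17 (A B p u n Ee t : ℝ)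
    (hB : 0 < B) (hBA : B < A) (hp : 0 < p) (hp1 : p < 1)
    (hEe : Ee = p * A + (1 - p) * B)
    (hu : B < u) (huE : u < Ee) (hn : -B < n)
    (ht : t = (Ee - u) * (n + u) / ((A - u) * (u - B))) :
    0 < t ∧ t < (u + n) / (u - B) ∧
      p * (A - u) / ((A - u) * t + u + n) + (1 - p) * (B - u) / ((B - u) * t + u + n) = 0 := by
  have hA : u < A := by nlinarith
  have h1 : 0 < A - u := by linarith
  have h2 : 0 < u - B := by linarith
  have h3 : 0 < n + u := by linarith
  have h4 : 0 < A - B := by linarith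
  have h5 : 0 < 1 - p := by linarith
  have h6 : 0 < Ee - u := by linarith
  -- `E - B = p (A - B)`, so the first denominator simplifies
  have d1 : (A - u) * t + u + n = (n + u) * p * (A - B) / (u - B) := by
    rw [ht, hEe]
    field_simp
    ring
  -- `A - E = (1 - p) (A - B)`, so the second denominator simplifies
  have d2 : (B - u) * t + u + n = (n + u) * (1 - p) * (A - B) / (A - u) := by
    rw [ht, hEe]
    field_simp
    ring
  refine ⟨by rw [ht]; positivity, ?_, ?_⟩
  · rw [ht, div_lt_div_iff₀ (by positivity) h2]
    have h7 : 0 < A - Ee := by rw [hEe]; nlinarith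
    have h8 : 0 < (n + u) * (u - B) * (A - Ee) := by positivity
    linarith
  · rw [d1, d2]
    field_simp
    ring
end

section
/- Let A, B, p be reals with 0 < B < A and 0 < p < 1, let E := pA + (1−p)B, let u, n be reals with B < u < E and n > −B, and let t := (E−u)(n+u)/((A−u)(u−B)). Then exp( p·log((A−u)t/(u+n) + 1) + (1−p)·log((B−u)t/(u+n) + 1) ) = (A−B)·(p/(u−B))^p·((1−p)/(A−u))^{1−p}; in particular the maximized pre-growth rate of the translated two-point game at price u+n is independent of n. -/
/-!
Write `X = A - B`. The factor `u + n` of `t` cancels the price `u + n`, so the two values whose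
logarithms are averaged are `X * (p / (u - B))` and `X * ((1 - p) / (A - u))`, free of `n`.
Their weighted geometric mean with weights `p` and `1 - p` is the right-hand side, since
`X ^ p * X ^ (1 - p) = X`.
-/

open MeasureTheory Real Set Filter Topology
open scoped Classical

/-- The maximized pre-growth rate of the translated two-point game at price `u + n`
equals `(A − B) (p/(u−B))^p ((1−p)/(A−u))^{1−p}`, independently of `n`. -/
theorem stmt18 (A B p u n Ee t : ℝ)
    (hB : 0 < B) (hBA : B < A) (hp : 0 < p) (hp1 : p < 1)
    (hEe : Ee = p * A + (1 - p) * B)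
    (hu : B < u) (huE : u < Ee) (hn : -B < n)
    (ht : t = (Ee - u) * (n + u) / ((A - u) * (u - B))) :
    Real.exp (p * Real.log ((A - u) * t / (u + n) + 1) +
        (1 - p) * Real.log ((B - u) * t / (u + n) + 1)) =
      (A - B) * (p / (u - B)) ^ p * ((1 - p) / (A - u)) ^ (1 - p) := by
  have hX : 0 < A - B := by linarith
  have huB : 0 < u - B := by linarith
  have huA : 0 < A - u := by nlinarith
  have hun : 0 < u + n := by linarith
  have hwin : (A - u) * t / (u + n) + 1 = (A - B) * (p / (u - B)) := by
    rw [ht, hEe]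
    field_simp
    ring
  have hlose : (B - u) * t / (u + n) + 1 = (A - B) * ((1 - p) / (A - u)) := by
    rw [ht, hEe]
    field_simp
    ring
  have hP : 0 < p / (u - B) := by positivity
  have hQ : 0 < (1 - p) / (A - u) := div_pos (by linarith) huA
  rw [hwin, hlose, Real.log_mul hX.ne' hP.ne', Real.log_mul hX.ne' hQ.ne',
    Real.rpow_def_of_pos hP, Real.rpow_def_of_pos hQ]
  nth_rewrite 3 [← Real.exp_log hX]
  rw [← Real.exp_add, ← Real.exp_add]
  congr 1
  ring
end
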